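/- Let k ≥ 1, β ∈ (0, min(2,k)), and S(t,x) the heat kernel on ℝ^k. There exists a constant C₀ > 0 such that for all t > 0 and x, y ∈ ℝ^k, ∫_{ℝ^k} ‖z‖^{-β} |S(t, x+z) - S(t, y+z)| dz ≤ C₀ · t^{-β/2} · min(‖x-y‖/t^{1/2}, 1). -/

import Mathlib

open Real MeasureTheory

noncomputable def heatKernel (k : ℕ) (t : ℝ) (x : EuclideanSpace ℝ (Fin k)) : ℝ :=
  (2 * Real.pi * t) ^ (-(k : ℝ) / 2) * Real.exp (-‖x‖ ^ 2 / (2 * t))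

/-!
Since `exp (-r² / (2t))` is the square of the bounded, `t ^ (-1/2)`-Lipschitz function
`exp (-r² / (4t))`, factoring the difference of squares gives
`|S(t, x) - S(t, y)| ≤ 2 ^ (k/2) * min (‖x - y‖ / √t) 1 * (S(2t, x) + S(2t, y))`.
It remains to bound `∫ ‖z‖ ^ (-β) * S(t, x + z) dz` by a multiple of `t ^ (-β/2)`, uniformly in `x`.
The substitution `z = √t • w` reduces this to `t = 1`, where the weight is integrable on the unit
ball and at most `1` outside it, while the kernel is bounded and has integral `1`.
-/

open Metric Module Set

section RieszWeight

variable {E : Type*} [NormedAddCommGroup E] {β M : ℝ}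

lemma norm_rpow_neg_mul_le_indicator_add (hβ : 0 ≤ β) (z : E) {a : ℝ} (ha : 0 ≤ a) (haM : a ≤ M) :
    ‖z‖ ^ (-β) * a ≤ M * (closedBall 0 1).indicator (fun w : E ↦ ‖w‖ ^ (-β)) z + a := by
  by_cases hz : z ∈ closedBall 0 1
  · rw [indicator_of_mem hz, mul_comm]
    have : a * ‖z‖ ^ (-β) ≤ M * ‖z‖ ^ (-β) := by gcongr
    linarith
  · have one_le_norm : 1 ≤ ‖z‖ := by
      rw [mem_closedBall_zero_iff, not_le] at hz
      exact hz.le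
    rw [indicator_of_notMem hz, mul_zero, zero_add]
    exact mul_le_of_le_one_left ha
      (rpow_le_one_of_one_le_of_nonpos one_le_norm (neg_nonpos.2 hβ))

variable [NormedSpace ℝ E] [FiniteDimensional ℝ E] [MeasurableSpace E] [BorelSpace E]
  {μ : Measure E} [μ.IsAddHaarMeasure] {g : E → ℝ}

lemma locallyIntegrable_norm_rpow_neg (hβ : 0 ≤ β) (hβd : β < finrank ℝ E) :
    LocallyIntegrable (fun z : E ↦ ‖z‖ ^ (-β)) μ := by
  have finrank_pos : 0 < finrank ℝ E := by exact_mod_cast hβ.trans_lt hβd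
  refine locallyIntegrable_of_norm_le_rpow (C := 1) finrank_pos hβd (ae_of_all _ fun z ↦ ?_)
    (measurable_norm.pow_const _).aestronglyMeasurable
  rw [one_mul, norm_of_nonneg (by positivity)]

lemma integrable_indicator_closedBall_norm_rpow_neg (hβ : 0 ≤ β) (hβd : β < finrank ℝ E) :
    Integrable ((closedBall 0 1).indicator fun z : E ↦ ‖z‖ ^ (-β)) μ :=
  ((locallyIntegrable_norm_rpow_neg hβ hβd).integrableOn_isCompact
    (isCompact_closedBall 0 1)).integrable_indicator measurableSet_closedBall

lemma integrable_norm_rpow_neg_mul (hβ : 0 ≤ β) (hβd : β < finrank ℝ E) (hg : Integrable g μ)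
    (hg₀ : ∀ z, 0 ≤ g z) (hgM : ∀ z, g z ≤ M) :
    Integrable (fun z ↦ ‖z‖ ^ (-β) * g z) μ := by
  refine (((integrable_indicator_closedBall_norm_rpow_neg hβ hβd).const_mul M).add hg).mono'
    ((measurable_norm.pow_const _).aestronglyMeasurable.mul hg.aestronglyMeasurable)
    (ae_of_all _ fun z ↦ ?_)
  rw [norm_of_nonneg (mul_nonneg (by positivity) (hg₀ z))]
  exact norm_rpow_neg_mul_le_indicator_add hβ z (hg₀ z) (hgM z)

lemma integral_norm_rpow_neg_mul_le (hβ : 0 ≤ β) (hβd : β < finrank ℝ E) (hg : Integrable g μ)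
    (hg₀ : ∀ z, 0 ≤ g z) (hgM : ∀ z, g z ≤ M) :
    ∫ z, ‖z‖ ^ (-β) * g z ∂μ ≤ M * (∫ z in closedBall 0 1, ‖z‖ ^ (-β) ∂μ) + ∫ z, g z ∂μ := by
  have weight_integrable :=
    (integrable_indicator_closedBall_norm_rpow_neg (μ := μ) hβ hβd).const_mul M
  calc ∫ z, ‖z‖ ^ (-β) * g z ∂μ
      ≤ ∫ z, M * (closedBall 0 1).indicator (fun w : E ↦ ‖w‖ ^ (-β)) z + g z ∂μ :=
        integral_mono (integrable_norm_rpow_neg_mul hβ hβd hg hg₀ hgM)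
          (weight_integrable.add hg)
          fun z ↦ norm_rpow_neg_mul_le_indicator_add hβ z (hg₀ z) (hgM z)
    _ = M * (∫ z in closedBall 0 1, ‖z‖ ^ (-β) ∂μ) + ∫ z, g z ∂μ := by
        rw [integral_add weight_integrable hg, integral_const_mul,
          integral_indicator measurableSet_closedBall]

end RieszWeight

section Gaussian

lemma lipschitzWith_exp_neg_sq_div_four : LipschitzWith 1 fun s : ℝ ↦ exp (-s ^ 2 / 4) := by
  have hasDerivAt_gaussian (s : ℝ) :
      HasDerivAt (fun s : ℝ ↦ exp (-s ^ 2 / 4)) (exp (-s ^ 2 / 4) * (-s / 2)) s := by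
    have : HasDerivAt (fun s : ℝ ↦ -s ^ 2 / 4) (-s / 2) s :=
      ((hasDerivAt_pow 2 s).fun_neg.div_const 4).congr_deriv (by push_cast; ring)
    exact this.exp
  have abs_le_exp (s : ℝ) : |-s / 2| ≤ exp (s ^ 2 / 4) := by
    have := add_one_le_exp (s ^ 2 / 4)
    rw [abs_le]
    constructor <;> nlinarith [sq_nonneg (s / 2 - 1), sq_nonneg (s / 2 + 1)]
  refine lipschitzWith_of_nnnorm_deriv_le (fun s ↦ (hasDerivAt_gaussian s).differentiableAt)
    fun s ↦ ?_
  rw [(hasDerivAt_gaussian s).deriv, ← NNReal.coe_le_coe, coe_nnnorm, NNReal.coe_one]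
  calc ‖exp (-s ^ 2 / 4) * (-s / 2)‖
      = exp (-s ^ 2 / 4) * |-s / 2| := by rw [norm_mul, norm_eq_abs, norm_eq_abs, abs_exp]
    _ ≤ exp (-s ^ 2 / 4) * exp (s ^ 2 / 4) := by gcongr; exact abs_le_exp s
    _ = 1 := by rw [neg_div, ← exp_add, neg_add_cancel, exp_zero]

variable {E : Type*} [SeminormedAddCommGroup E] {t : ℝ}

lemma abs_exp_neg_norm_sq_div_four_mul_sub_le (ht : 0 < t) (x y : E) :
    |exp (-‖x‖ ^ 2 / (4 * t)) - exp (-‖y‖ ^ 2 / (4 * t))| ≤ min (‖x - y‖ / √t) 1 := by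
  refine le_min ?_ ?_
  · have rescale (r : ℝ) : -r ^ 2 / (4 * t) = -(r / √t) ^ 2 / 4 := by
      rw [div_pow, sq_sqrt ht.le]
      field_simp
    calc |exp (-‖x‖ ^ 2 / (4 * t)) - exp (-‖y‖ ^ 2 / (4 * t))|
        ≤ |‖x‖ / √t - ‖y‖ / √t| := by
          simpa [rescale, dist_eq] using
            lipschitzWith_exp_neg_sq_div_four.dist_le_mul (‖x‖ / √t) (‖y‖ / √t)
      _ = |‖x‖ - ‖y‖| / √t := by rw [← sub_div, abs_div, abs_of_nonneg (sqrt_nonneg t)]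
      _ ≤ ‖x - y‖ / √t := by gcongr; exact abs_norm_sub_norm_le x y
  · have exp_mem (v : E) : exp (-‖v‖ ^ 2 / (4 * t)) ∈ Icc (0 : ℝ) 1 :=
      ⟨(exp_pos _).le, exp_le_one_iff.2 (by rw [neg_div]; exact neg_nonpos.2 (by positivity))⟩
    simpa using abs_sub_le_of_le_of_le (exp_mem x).1 (exp_mem x).2 (exp_mem y).1 (exp_mem y).2

lemma abs_exp_neg_norm_sq_div_two_mul_sub_le (ht : 0 < t) (x y : E) :
    |exp (-‖x‖ ^ 2 / (2 * t)) - exp (-‖y‖ ^ 2 / (2 * t))| ≤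
      min (‖x - y‖ / √t) 1 * (exp (-‖x‖ ^ 2 / (4 * t)) + exp (-‖y‖ ^ 2 / (4 * t))) := by
  have eq_sq (v : E) : exp (-‖v‖ ^ 2 / (2 * t)) = exp (-‖v‖ ^ 2 / (4 * t)) ^ 2 := by
    rw [← exp_nat_mul]
    congr 1
    push_cast
    field_simp
    norm_num
  rw [eq_sq, eq_sq, sq_sub_sq, abs_mul, mul_comm, abs_of_pos (a := _ + _) (by positivity)]
  gcongr
  exact abs_exp_neg_norm_sq_div_four_mul_sub_le ht x y

end Gaussian

section HeatKernel

variable {k : ℕ} {t β : ℝ}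

lemma heatKernel_nonneg (ht : 0 < t) (x : EuclideanSpace ℝ (Fin k)) : 0 ≤ heatKernel k t x := by
  unfold heatKernel
  positivity

lemma heatKernel_le_heatKernel_zero (ht : 0 < t) (x : EuclideanSpace ℝ (Fin k)) :
    heatKernel k t x ≤ heatKernel k t 0 := by
  unfold heatKernel
  gcongr
  simp

lemma integral_heatKernel (ht : 0 < t) : ∫ x, heatKernel k t x = 1 := by
  have exponent_eq (x : EuclideanSpace ℝ (Fin k)) :
      -‖x‖ ^ 2 / (2 * t) = -(2 * t)⁻¹ * ‖x‖ ^ 2 := by ring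
  simp only [heatKernel, exponent_eq]
  rw [integral_const_mul, GaussianFourier.integral_rexp_neg_mul_sq_norm (by positivity),
    finrank_euclideanSpace_fin, div_inv_eq_mul, show π * (2 * t) = 2 * π * t by ring,
    ← rpow_add (by positivity), neg_div, neg_add_cancel, rpow_zero]

lemma integrable_heatKernel (ht : 0 < t) : Integrable (heatKernel k t) :=
  integrable_of_integral_eq_one (integral_heatKernel ht)

lemma heatKernel_sqrt_smul (ht : 0 < t) (w : EuclideanSpace ℝ (Fin k)) :
    heatKernel k t (√t • w) = t ^ (-(k : ℝ) / 2) * heatKernel k 1 w := by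
  have exponent_eq : -‖√t • w‖ ^ 2 / (2 * t) = -‖w‖ ^ 2 / (2 * 1) := by
    rw [norm_smul, mul_pow, norm_of_nonneg (sqrt_nonneg t), sq_sqrt ht.le]
    field_simp
  rw [heatKernel, heatKernel, exponent_eq, mul_rpow (by positivity) ht.le, mul_one (2 * π)]
  ring

lemma abs_heatKernel_sub_le (ht : 0 < t) (x y : EuclideanSpace ℝ (Fin k)) :
    |heatKernel k t x - heatKernel k t y| ≤
      2 ^ ((k : ℝ) / 2) * min (‖x - y‖ / √t) 1 *
        (heatKernel k (2 * t) x + heatKernel k (2 * t) y) := by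
  have normalization : (2 * π * t) ^ (-(k : ℝ) / 2) =
      2 ^ ((k : ℝ) / 2) * (2 * π * (2 * t)) ^ (-(k : ℝ) / 2) := by
    rw [show 2 * π * (2 * t) = 2 * (2 * π * t) by ring, mul_rpow two_pos.le (by positivity),
      ← mul_assoc, ← rpow_add two_pos, neg_div, add_neg_cancel, rpow_zero, one_mul]
  have two_mul_two_mul : 2 * (2 * t) = 4 * t := by ring
  unfold heatKernel
  rw [← mul_sub, abs_mul, abs_of_pos (by positivity), two_mul_two_mul, ← mul_add]
  calc (2 * π * t) ^ (-(k : ℝ) / 2) * |exp (-‖x‖ ^ 2 / (2 * t)) - exp (-‖y‖ ^ 2 / (2 * t))|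
      ≤ (2 * π * t) ^ (-(k : ℝ) / 2) * (min (‖x - y‖ / √t) 1 *
          (exp (-‖x‖ ^ 2 / (4 * t)) + exp (-‖y‖ ^ 2 / (4 * t)))) := by
        gcongr
        exact abs_exp_neg_norm_sq_div_two_mul_sub_le ht x y
    _ = _ := by
        rw [normalization]
        ring

lemma integrable_norm_rpow_neg_mul_heatKernel (hβ : 0 ≤ β) (hβk : β < k) (ht : 0 < t)
    (x : EuclideanSpace ℝ (Fin k)) :
    Integrable fun z ↦ ‖z‖ ^ (-β) * heatKernel k t (x + z) :=
  integrable_norm_rpow_neg_mul hβ (by simpa using hβk) ((integrable_heatKernel ht).comp_add_left x)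
    (fun z ↦ heatKernel_nonneg ht (x + z)) fun z ↦ heatKernel_le_heatKernel_zero ht (x + z)

lemma integrable_norm_rpow_neg_mul_abs_heatKernel_sub (hβ : 0 ≤ β) (hβk : β < k) (ht : 0 < t)
    (x y : EuclideanSpace ℝ (Fin k)) :
    Integrable fun z ↦ ‖z‖ ^ (-β) * |heatKernel k t (x + z) - heatKernel k t (y + z)| := by
  refine ((integrable_norm_rpow_neg_mul_heatKernel hβ hβk ht x).sub
    (integrable_norm_rpow_neg_mul_heatKernel hβ hβk ht y)).abs.congr (ae_of_all _ fun z ↦ ?_)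
  simp only [Pi.sub_apply]
  rw [← mul_sub, abs_mul, abs_of_nonneg (by positivity)]

lemma integral_norm_rpow_neg_mul_heatKernel (ht : 0 < t) (β : ℝ) (x : EuclideanSpace ℝ (Fin k)) :
    ∫ z, ‖z‖ ^ (-β) * heatKernel k t (x + z) =
      t ^ (-β / 2) * ∫ z, ‖z‖ ^ (-β) * heatKernel k 1 ((√t)⁻¹ • x + z) := by
  have sqrt_rpow (s : ℝ) : √t ^ (-s) = t ^ (-s / 2) := by
    rw [sqrt_eq_rpow, ← rpow_mul ht.le]
    ring_nf
  have integrand_smul (z : EuclideanSpace ℝ (Fin k)) :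
      ‖√t • z‖ ^ (-β) * heatKernel k t (x + √t • z) = t ^ (-(k : ℝ) / 2) *
        (t ^ (-β / 2) * (‖z‖ ^ (-β) * heatKernel k 1 ((√t)⁻¹ • x + z))) := by
    have add_smul_eq : x + √t • z = √t • ((√t)⁻¹ • x + z) := by
      rw [smul_add, smul_inv_smul₀ (sqrt_pos.2 ht).ne']
    rw [add_smul_eq, heatKernel_sqrt_smul ht, norm_smul, norm_of_nonneg (sqrt_nonneg t),
      mul_rpow (sqrt_nonneg t) (norm_nonneg z), sqrt_rpow]
    ring
  have jacobian : (√t ^ k)⁻¹ = t ^ (-(k : ℝ) / 2) := by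
    rw [← sqrt_rpow, rpow_neg (sqrt_nonneg t), rpow_natCast]
  have change_of_variables := Measure.integral_comp_smul_of_nonneg volume
    (fun z ↦ ‖z‖ ^ (-β) * heatKernel k t (x + z)) (√t) (hR := sqrt_nonneg t)
  simp only [integrand_smul, integral_const_mul, finrank_euclideanSpace_fin, jacobian,
    smul_eq_mul] at change_of_variables
  exact (mul_left_cancel₀ (by positivity) change_of_variables).symm

lemma exists_forall_integral_norm_rpow_neg_mul_heatKernel_le (hβ : 0 ≤ β) (hβk : β < k) :
    ∃ C : ℝ, 0 < C ∧ ∀ t : ℝ, 0 < t → ∀ x : EuclideanSpace ℝ (Fin k),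
      ∫ z, ‖z‖ ^ (-β) * heatKernel k t (x + z) ≤ C * t ^ (-β / 2) := by
  have kernel_zero_nonneg := heatKernel_nonneg (k := k) one_pos 0
  refine ⟨heatKernel k 1 0 * (∫ z in closedBall (0 : EuclideanSpace ℝ (Fin k)) 1, ‖z‖ ^ (-β)) + 1,
    by positivity, fun t ht x ↦ ?_⟩
  rw [integral_norm_rpow_neg_mul_heatKernel ht, mul_comm]
  gcongr
  have unit_time_bound := integral_norm_rpow_neg_mul_le hβ (by simpa using hβk)
    ((integrable_heatKernel one_pos).comp_add_left ((√t)⁻¹ • x))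
    (fun z ↦ heatKernel_nonneg one_pos _) (fun z ↦ heatKernel_le_heatKernel_zero one_pos _)
  rwa [integral_add_left_eq_self, integral_heatKernel one_pos] at unit_time_bound

lemma integral_norm_rpow_neg_mul_abs_heatKernel_sub_le (hβ : 0 ≤ β) (hβk : β < k) (ht : 0 < t)
    (x y : EuclideanSpace ℝ (Fin k)) :
    ∫ z, ‖z‖ ^ (-β) * |heatKernel k t (x + z) - heatKernel k t (y + z)| ≤
      2 ^ ((k : ℝ) / 2) * min (‖x - y‖ / √t) 1 *
        ((∫ z, ‖z‖ ^ (-β) * heatKernel k (2 * t) (x + z)) +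
          ∫ z, ‖z‖ ^ (-β) * heatKernel k (2 * t) (y + z)) := by
  have integrable_double_time := integrable_norm_rpow_neg_mul_heatKernel hβ hβk
    (mul_pos two_pos ht)
  rw [← integral_add (integrable_double_time x) (integrable_double_time y), ← integral_const_mul]
  refine integral_mono (integrable_norm_rpow_neg_mul_abs_heatKernel_sub hβ hβk ht x y)
    (((integrable_double_time x).add (integrable_double_time y)).const_mul _) fun z ↦ ?_
  have pointwise := abs_heatKernel_sub_le ht (x + z) (y + z)
  rw [add_sub_add_right_eq_sub] at pointwise
  calc ‖z‖ ^ (-β) * |heatKernel k t (x + z) - heatKernel k t (y + z)|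
      ≤ ‖z‖ ^ (-β) * (2 ^ ((k : ℝ) / 2) * min (‖x - y‖ / √t) 1 *
          (heatKernel k (2 * t) (x + z) + heatKernel k (2 * t) (y + z))) := by gcongr
    _ = _ := by ring

end HeatKernel

theorem stmt_8_general (k : ℕ) (β : ℝ) (hβ : 0 ≤ β) (hβk : β < k) :
    ∃ C₀ : ℝ, 0 < C₀ ∧
      ∀ t : ℝ, 0 < t → ∀ x y : EuclideanSpace ℝ (Fin k),
        Integrable (fun z : EuclideanSpace ℝ (Fin k) ↦
            ‖z‖ ^ (-β) * |heatKernel k t (x + z) - heatKernel k t (y + z)|) ∧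
          ∫ z : EuclideanSpace ℝ (Fin k),
              ‖z‖ ^ (-β) * |heatKernel k t (x + z) - heatKernel k t (y + z)| ≤
            C₀ * t ^ (-β / 2) * min (‖x - y‖ / t ^ ((1 : ℝ) / 2)) 1 := by
  obtain ⟨C, C_pos, integral_le⟩ := exists_forall_integral_norm_rpow_neg_mul_heatKernel_le hβ hβk
  refine ⟨2 ^ ((k : ℝ) / 2) * (2 * C * 2 ^ (-β / 2)), by positivity, fun t ht x y ↦
    ⟨integrable_norm_rpow_neg_mul_abs_heatKernel_sub hβ hβk ht x y, ?_⟩⟩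
  rw [← sqrt_eq_rpow]
  have ht2 : 0 < 2 * t := by positivity
  calc _ ≤ 2 ^ ((k : ℝ) / 2) * min (‖x - y‖ / √t) 1 *
        ((∫ z, ‖z‖ ^ (-β) * heatKernel k (2 * t) (x + z)) +
          ∫ z, ‖z‖ ^ (-β) * heatKernel k (2 * t) (y + z)) :=
        integral_norm_rpow_neg_mul_abs_heatKernel_sub_le hβ hβk ht x y
    _ ≤ 2 ^ ((k : ℝ) / 2) * min (‖x - y‖ / √t) 1 *
        (C * (2 * t) ^ (-β / 2) + C * (2 * t) ^ (-β / 2)) := by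
        gcongr <;> exact integral_le _ ht2 _
    _ = 2 ^ ((k : ℝ) / 2) * (2 * C * 2 ^ (-β / 2)) * t ^ (-β / 2) * min (‖x - y‖ / √t) 1 := by
        rw [mul_rpow two_pos.le ht.le]
        ring

theorem stmt_8 (k : ℕ) (hk : 1 ≤ k) (β : ℝ) (hβ : 0 < β) (hβ2 : β < min 2 (k : ℝ)) :
    ∃ C₀ : ℝ, 0 < C₀ ∧
      ∀ t : ℝ, 0 < t → ∀ x y : EuclideanSpace ℝ (Fin k),
        ∫ z : EuclideanSpace ℝ (Fin k),
            ‖z‖ ^ (-β) * |heatKernel k t (x + z) - heatKernel k t (y + z)| ≤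
          C₀ * t ^ (-β / 2) * min (‖x - y‖ / t ^ ((1 : ℝ) / 2)) 1 := by
  obtain ⟨C₀, C₀_pos, h⟩ := stmt_8_general k β hβ.le (hβ2.trans_le (min_le_right _ _))
  exact ⟨C₀, C₀_pos, fun t ht x y ↦ (h t ht x y).2⟩
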